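/- arXiv:2411.06427 — 3 statements merged into one kernel-verified Lean document; each statement's English description precedes it below -/
import Mathlib

section
/- Let S ⊆ V be nonempty and let v ∈ V ∖ S. Then RQ(S ∪ {v}) ≥ RQ(S) if and only if Δ_S(v) ≥ RQ(S). -/
open scoped Classical

/-- The value `(x p - x q)^2` of an unordered pair/edge. -/
noncomputable def edgeVal {V : Type*} (x : V → ℝ) : Sym2 V → ℝ :=
  Sym2.lift ⟨fun p q => (x p - x q) ^ 2, fun p q => by ring⟩

/-- Rayleigh quotient of the subgraph induced on `S`:
numerator sums `(x p - x q)^2` over unordered edges of `G` with both endpoints in `S`. -/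
noncomputable def RQ {V : Type*} [Fintype V] [DecidableEq V]
    (G : SimpleGraph V) (x : V → ℝ) (S : Finset V) : ℝ :=
  (∑ e ∈ G.edgeFinset.filter (fun e => ∀ v ∈ e, v ∈ S), edgeVal x e) /
    (∑ p ∈ S, x p ^ 2)

/-- Increment of a single node `v` relative to `S`. -/
noncomputable def deltaNode {V : Type*} [Fintype V] [DecidableEq V]
    (G : SimpleGraph V) (x : V → ℝ) (S : Finset V) (v : V) : ℝ :=
  (∑ r ∈ S.filter (fun r => G.Adj v r), (x v - x r) ^ 2) / (x v) ^ 2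

/-- Increment of a nodeset `T` (disjoint from `S`) relative to `S`:
cross edges between `T` and `S` plus edges internal to `T`, over the mass of `T`. -/
noncomputable def deltaSet {V : Type*} [Fintype V] [DecidableEq V]
    (G : SimpleGraph V) (x : V → ℝ) (S T : Finset V) : ℝ :=
  ((∑ v ∈ T, ∑ r ∈ S.filter (fun r => G.Adj v r), (x v - x r) ^ 2) +
      ∑ e ∈ G.edgeFinset.filter (fun e => ∀ w ∈ e, w ∈ T), edgeVal x e) /
    (∑ v ∈ T, x v ^ 2)

/-!
Adding `v ∉ S` to `S` adds to the numerator of `RQ G x S` exactly the edges from `v` into `S`, and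
adds `x v ^ 2` to its denominator. So `RQ G x (insert v S)` is the mediant of the fractions
`deltaNode G x S v` and `RQ G x S`, hence lies between the two.
-/

theorem div_le_add_div_add_iff {K : Type*} [Semifield K] [LinearOrder K] [IsStrictOrderedRing K]
    {a b c d : K} (hb : 0 < b) (hd : 0 < d) :
    c / d ≤ (a + c) / (b + d) ↔ c / d ≤ a / b := by
  rw [div_le_div_iff₀ hd (add_pos hb hd), div_le_div_iff₀ hd hb, mul_add, add_mul,
    add_le_add_iff_right]

/-- The edges of the subgraph of `G` induced on `S`. They are encoded as unordered pairs in `V`,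
not in the subtype of `S`, so that the edge sets for different `S` can be compared. -/
def edgesWithin {V : Type*} (G : SimpleGraph V) [DecidableRel G.Adj] (S : Finset V) :
    Finset (Sym2 V) :=
  S.sym2.filter (· ∈ G.edgeSet)

section edgesWithin

variable {V : Type*} [DecidableEq V] (G : SimpleGraph V)

theorem edgesWithin_insert [DecidableRel G.Adj] (v : V) (S : Finset V) :
    edgesWithin G (insert v S) = (S.filter (G.Adj v)).image (s(v, ·)) ∪ edgesWithin G S := by
  simp [edgesWithin, Finset.sym2_insert, Finset.filter_union, Finset.filter_insert,
    Finset.filter_image]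

theorem disjoint_image_mk_edgesWithin [DecidableRel G.Adj] {v : V} {S : Finset V} (hv : v ∉ S)
    (T : Finset V) : Disjoint (T.image (s(v, ·))) (edgesWithin G S) := by
  simp [Finset.disjoint_left, edgesWithin, hv]

theorem sum_edgesWithin_insert [DecidableRel G.Adj] {M : Type*} [AddCommMonoid M]
    (f : Sym2 V → M) {v : V} {S : Finset V} (hv : v ∉ S) :
    ∑ e ∈ edgesWithin G (insert v S), f e =
      ∑ r ∈ S with G.Adj v r, f s(v, r) + ∑ e ∈ edgesWithin G S, f e := by
  rw [edgesWithin_insert, Finset.sum_union (disjoint_image_mk_edgesWithin G hv _),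
    Finset.sum_image fun _ _ _ _ => Sym2.congr_right.mp]

theorem RQ_eq_sum_edgesWithin_div [Fintype V] (x : V → ℝ) (S : Finset V) :
    RQ G x S = (∑ e ∈ edgesWithin G S, edgeVal x e) / ∑ p ∈ S, x p ^ 2 := by
  have hedges : G.edgeFinset.filter (fun e => ∀ v ∈ e, v ∈ S) = edgesWithin G S := by
    ext e
    simp [edgesWithin, Finset.mem_sym2_iff, and_comm]
  rw [RQ, hedges]

theorem RQ_insert [Fintype V] (x : V → ℝ) {v : V} {S : Finset V} (hv : v ∉ S) :
    RQ G x (insert v S) =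
      (∑ r ∈ S with G.Adj v r, (x v - x r) ^ 2 + ∑ e ∈ edgesWithin G S, edgeVal x e) /
        (x v ^ 2 + ∑ p ∈ S, x p ^ 2) := by
  simp only [RQ_eq_sum_edgesWithin_div, sum_edgesWithin_insert G _ hv, Finset.sum_insert hv,
    edgeVal, Sym2.lift_mk]

end edgesWithin

/-- **Non-strict variant of Theorem 1.** For nonempty `S` and `v ∉ S`,
`RQ (insert v S) ≥ RQ S` iff `Δ_S(v) ≥ RQ S`. -/
theorem rq_insert_ge_iff {V : Type*} [Fintype V] [DecidableEq V]
    (G : SimpleGraph V) (x : V → ℝ) (hx : ∀ v, x v ≠ 0)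
    (S : Finset V) (hS : S.Nonempty) (v : V) (hv : v ∉ S) :
    RQ G x (insert v S) ≥ RQ G x S ↔ deltaNode G x S v ≥ RQ G x S := by
  have hxv : 0 < x v ^ 2 := sq_pos_of_ne_zero (hx v)
  have hxS : 0 < ∑ p ∈ S, x p ^ 2 := Finset.sum_pos (fun p _ => sq_pos_of_ne_zero (hx p)) hS
  rw [RQ_insert G x hv, deltaNode, RQ_eq_sum_edgesWithin_div]
  exact div_le_add_div_add_iff hxv hxS
end

section
/- Let S ⊆ V be nonempty and let T* ⊆ V ∖ S be a nonempty set such that Δ_S(T*) > RQ(S) and Δ_S(T*) ≥ Δ_S(T) for every nonempty T ⊆ V ∖ S. Then for every subset T' ⊆ V ∖ S one has Δ_S(T*) > RQ(S ∪ T'). -/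
open scoped Classical

/-!
The edges inside `S ∪ T` are those inside `S`, those inside `T` and those joining `T` to `S`, so
`RQ (S ∪ T)` is the mediant of the fractions `RQ S` and `Δ_S(T)`. A mediant lies below every bound
for both fractions, strictly as soon as one of the two bounds is strict.
-/

section Sym2Sums

variable {V M : Type*} [DecidableEq V] [AddCommMonoid M]

theorem sum_sym2_insert (f : Sym2 V → M) {v : V} {A : Finset V} (hv : v ∉ A) :
    ∑ e ∈ (insert v A).sym2, f e = f s(v, v) + ∑ r ∈ A, f s(v, r) + ∑ e ∈ A.sym2, f e := by
  rw [← Finset.cons_eq_insert v A hv, Finset.sym2_cons, Finset.sum_disjUnion, Finset.sum_map,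
    Finset.sum_cons]
  rfl

theorem sum_sym2_union (f : Sym2 V → M) {S T : Finset V} (hTS : Disjoint T S) :
    ∑ e ∈ (S ∪ T).sym2, f e =
      ∑ e ∈ S.sym2, f e + (∑ v ∈ T, ∑ r ∈ S, f s(v, r) + ∑ e ∈ T.sym2, f e) := by
  induction T using Finset.induction_on with
  | empty => simp
  | insert v T hvT ih =>
    obtain ⟨hvS, hTS⟩ := Finset.disjoint_insert_left.mp hTS
    rw [Finset.union_insert, sum_sym2_insert f (by simp [hvS, hvT]), sum_sym2_insert f hvT,
      Finset.sum_insert hvT, Finset.sum_union hTS.symm, ih hTS]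
    abel

end Sym2Sums

theorem add_div_add_lt_of_lt_of_le {K : Type*} [Field K] [LinearOrder K] [IsStrictOrderedRing K]
    {a b a' b' c : K} (hb : 0 < b) (hb' : 0 < b') (h : a / b < c) (h' : a' / b' ≤ c) :
    (a + a') / (b + b') < c := by
  rw [div_lt_iff₀ (add_pos hb hb'), mul_add]
  exact add_lt_add_of_lt_of_le ((div_lt_iff₀ hb).mp h) ((div_le_iff₀ hb').mp h')

/-- The Dirichlet energy `(x p - x q) ^ 2` of an edge of `G`, extended by zero to all unordered
pairs so that induced subgraphs can be summed over `Finset.sym2`. -/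
noncomputable def edgeEnergy {V : Type*} (G : SimpleGraph V) (x : V → ℝ) : Sym2 V → ℝ :=
  G.edgeSet.indicator (edgeVal x)

section RayleighQuotient

variable {V : Type*}

theorem sum_edgeEnergy_mk (G : SimpleGraph V) (x : V → ℝ) (S : Finset V) (v : V) :
    ∑ r ∈ S, edgeEnergy G x s(v, r) = ∑ r ∈ S.filter (fun r => G.Adj v r), (x v - x r) ^ 2 := by
  simp only [edgeEnergy, Set.indicator_apply, SimpleGraph.mem_edgeSet, Finset.sum_filter]
  rfl

theorem sum_sym2_edgeEnergy (G : SimpleGraph V) [Fintype G.edgeSet] (x : V → ℝ) (S : Finset V)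
    [DecidablePred fun e : Sym2 V => ∀ v ∈ e, v ∈ S] :
    ∑ e ∈ S.sym2, edgeEnergy G x e =
      ∑ e ∈ G.edgeFinset.filter (fun e => ∀ v ∈ e, v ∈ S), edgeVal x e := by
  simp only [edgeEnergy, Set.indicator_apply, ← Finset.sum_filter]
  congr 1
  ext e
  simp only [Finset.mem_filter, Finset.mem_sym2_iff, SimpleGraph.mem_edgeFinset, and_comm]

variable [Fintype V] [DecidableEq V]

theorem RQ_eq_sum_edgeEnergy_div (G : SimpleGraph V) (x : V → ℝ) (S : Finset V) :
    RQ G x S = (∑ e ∈ S.sym2, edgeEnergy G x e) / ∑ p ∈ S, x p ^ 2 := by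
  rw [RQ, sum_sym2_edgeEnergy]

theorem deltaSet_eq_sum_edgeEnergy_div (G : SimpleGraph V) (x : V → ℝ) (S T : Finset V) :
    deltaSet G x S T =
      (∑ v ∈ T, ∑ r ∈ S, edgeEnergy G x s(v, r) + ∑ e ∈ T.sym2, edgeEnergy G x e) /
        ∑ v ∈ T, x v ^ 2 := by
  simp only [deltaSet, sum_edgeEnergy_mk, sum_sym2_edgeEnergy]

theorem deltaMax_gt_rq_extension_general (G : SimpleGraph V) (x : V → ℝ) {S T : Finset V} {c : ℝ}
    (hS : 0 < ∑ p ∈ S, x p ^ 2) (hT : 0 < ∑ v ∈ T, x v ^ 2) (hTS : Disjoint T S)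
    (hRQ : RQ G x S < c) (hdelta : deltaSet G x S T ≤ c) :
    RQ G x (S ∪ T) < c := by
  rw [RQ_eq_sum_edgeEnergy_div] at hRQ
  rw [deltaSet_eq_sum_edgeEnergy_div] at hdelta
  rw [RQ_eq_sum_edgeEnergy_div, sum_sym2_union _ hTS, Finset.sum_union hTS.symm]
  exact add_div_add_lt_of_lt_of_le hS hT hRQ hdelta

end RayleighQuotient

/-- **Inequality (A.14) of Theorem 2.** If `T*` is a nonempty set disjoint from `S`
with `Δ_S(T*) > RQ(S)` and `Δ_S(T*)` maximal among all nonempty sets disjoint from `S`,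
then `Δ_S(T*)` strictly dominates the Rayleigh quotient of every extension `S ∪ T'`. -/
theorem deltaMax_gt_rq_extension {V : Type*} [Fintype V] [DecidableEq V]
    (G : SimpleGraph V) (x : V → ℝ) (hx : ∀ v, x v ≠ 0)
    (S : Finset V) (hS : S.Nonempty)
    (Tstar : Finset V) (hTstar : Tstar.Nonempty) (hTdisj : Disjoint Tstar S)
    (hgt : deltaSet G x S Tstar > RQ G x S)
    (hmax : ∀ T : Finset V, T.Nonempty → Disjoint T S →
      deltaSet G x S Tstar ≥ deltaSet G x S T) :
    ∀ T' : Finset V, Disjoint T' S →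
      deltaSet G x S Tstar > RQ G x (S ∪ T') := by
  intro T' hT'
  have mass_pos {A : Finset V} (hA : A.Nonempty) : 0 < ∑ p ∈ A, x p ^ 2 :=
    Finset.sum_pos (fun p _ => sq_pos_of_ne_zero (hx p)) hA
  obtain rfl | hne := T'.eq_empty_or_nonempty
  · rwa [Finset.union_empty]
  · exact deltaMax_gt_rq_extension_general G x (mass_pos hS) (mass_pos hne) hT' hgt
      (hmax T' hne hT')
end

section
/- Let S ⊆ V be nonempty. For every nonempty T ⊆ V ∖ S there exists a nonempty T' ⊆ T such that the subgraph of G induced on T' is connected and Δ_S(T') ≥ Δ_S(T). Consequently, the maximum of Δ_S over nonempty subsets of V ∖ S is attained on a subset whose induced subgraph is connected. -/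
open scoped Classical

/-!
If a nodeset is a union of two disjoint parts with no edge between them, then both the numerator
and the denominator of `Δ_S` are sums over the parts, so `Δ_S` of the union is the mediant of the
values on the parts and is at most their maximum. Hence an inclusion-minimal nonempty `T' ⊆ T`
with `Δ_S(T') ≥ Δ_S(T)` cannot be split in this way, so it induces a connected subgraph.
-/

section Mediant

variable {K : Type*} [Field K] [LinearOrder K] [IsStrictOrderedRing K]

theorem add_div_add_le_max_div {a b c d : K} (hb : 0 < b) (hd : 0 < d) :
    (a + c) / (b + d) ≤ max (a / b) (c / d) := by
  have ha : a ≤ max (a / b) (c / d) * b := (div_le_iff₀ hb).1 (le_max_left _ _)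
  have hc : c ≤ max (a / b) (c / d) * d := (div_le_iff₀ hd).1 (le_max_right _ _)
  rw [div_le_iff₀ (add_pos hb hd), mul_add]
  exact add_le_add ha hc

end Mediant

section Separation

variable {V : Type*} {G : SimpleGraph V} {A B : Finset V}

/-- `A` and `B` are separated in `G` if they are disjoint and no edge of `G` joins them; they may
be empty. A nodeset whose induced subgraph is disconnected is a union of two such nonempty sets. -/
structure IsSeparated (G : SimpleGraph V) (A B : Finset V) : Prop where
  disjoint : Disjoint A B
  not_adj : ∀ a ∈ A, ∀ b ∈ B, ¬G.Adj a b

namespace IsSeparated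

theorem symm (h : IsSeparated G A B) : IsSeparated G B A where
  disjoint := h.disjoint.symm
  not_adj b hb a ha hadj := h.not_adj a ha b hb hadj.symm

variable [DecidableEq V]

theorem ssubset_union_left (h : IsSeparated G A B) (hB : B.Nonempty) : A ⊂ A ∪ B :=
  left_lt_sup.2 fun hBA => hB.ne_empty (h.disjoint.symm.eq_bot_of_le hBA)

theorem filter_edgeFinset_union [Fintype V] (h : IsSeparated G A B) :
    G.edgeFinset.filter (fun e => ∀ w ∈ e, w ∈ A ∪ B) =
      G.edgeFinset.filter (fun e => ∀ w ∈ e, w ∈ A) ∪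
        G.edgeFinset.filter (fun e => ∀ w ∈ e, w ∈ B) := by
  rw [← Finset.filter_or]
  refine Finset.filter_congr fun e he => ?_
  induction e with | _ p q
  have hpq : G.Adj p q := SimpleGraph.mem_edgeFinset.1 he
  have not_cross : ¬(p ∈ A ∧ q ∈ B) := fun ⟨hp, hq⟩ => h.not_adj p hp q hq hpq
  have not_cross' : ¬(q ∈ A ∧ p ∈ B) := fun ⟨hq, hp⟩ => h.not_adj q hq p hp hpq.symm
  simp only [Sym2.ball, Finset.mem_union]
  tauto

theorem sum_edgeFinset_union [Fintype V] {M : Type*} [AddCommMonoid M]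
    (h : IsSeparated G A B) (f : Sym2 V → M) :
    ∑ e ∈ G.edgeFinset.filter (fun e => ∀ w ∈ e, w ∈ A ∪ B), f e =
      ∑ e ∈ G.edgeFinset.filter (fun e => ∀ w ∈ e, w ∈ A), f e +
        ∑ e ∈ G.edgeFinset.filter (fun e => ∀ w ∈ e, w ∈ B), f e := by
  rw [h.filter_edgeFinset_union, Finset.sum_union]
  exact Finset.disjoint_filter.2 fun e _ hA hB =>
    Finset.disjoint_left.1 h.disjoint (hA _ e.out_fst_mem) (hB _ e.out_fst_mem)

end IsSeparated

variable [DecidableEq V]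

theorem exists_isSeparated_union_eq_of_not_connected {T : Finset V} (hT : T.Nonempty)
    (hconn : ¬(G.induce (T : Set V)).Connected) :
    ∃ A B : Finset V, A.Nonempty ∧ B.Nonempty ∧ IsSeparated G A B ∧ A ∪ B = T := by
  obtain ⟨a, ha⟩ := hT
  obtain ⟨b, hab⟩ : ∃ b, ¬(G.induce (T : Set V)).Reachable ⟨a, ha⟩ b := by
    contrapose! hconn
    exact SimpleGraph.connected_iff_exists_forall_reachable _ |>.2 ⟨_, hconn⟩
  let A := T.filter fun v => ∃ hv : v ∈ T, (G.induce (T : Set V)).Reachable ⟨a, ha⟩ ⟨v, hv⟩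
  have haA : a ∈ A := Finset.mem_filter.2 ⟨ha, ha, .rfl⟩
  have hbA : b.1 ∉ A := fun hb => hab (Finset.mem_filter.1 hb).2.2
  refine ⟨A, T \ A, ⟨a, haA⟩, ⟨b, Finset.mem_sdiff.2 ⟨b.2, hbA⟩⟩,
    ⟨Finset.disjoint_sdiff, fun p hp q hq hadj => ?_⟩,
    Finset.union_sdiff_of_subset (Finset.filter_subset _ _)⟩
  obtain ⟨-, hpT, hap⟩ := Finset.mem_filter.1 hp
  obtain ⟨hqT, hqA⟩ := Finset.mem_sdiff.1 hq
  have hpq : (G.induce (T : Set V)).Adj ⟨p, hpT⟩ ⟨q, hqT⟩ := hadj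
  exact hqA (Finset.mem_filter.2 ⟨hqT, hqT, hap.trans hpq.reachable⟩)

theorem exists_connected_subset_le_of_union_le_max {α : Type*} [LinearOrder α]
    {f : Finset V → α} {T : Finset V} (hT : T.Nonempty)
    (hf : ∀ A B : Finset V, A ∪ B ⊆ T → A.Nonempty → B.Nonempty → IsSeparated G A B →
      f (A ∪ B) ≤ max (f A) (f B)) :
    ∃ T' ⊆ T, T'.Nonempty ∧ (G.induce (T' : Set V)).Connected ∧ f T ≤ f T' := by
  obtain ⟨T', hT'T, hmin⟩ := exists_minimal_le_of_wellFoundedLT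
    (fun A : Finset V => A.Nonempty ∧ f T ≤ f A) T ⟨hT, le_rfl⟩
  refine ⟨T', hT'T, hmin.prop.1, ?_, hmin.prop.2⟩
  by_contra hconn
  obtain ⟨A, B, hA, hB, hAB, rfl⟩ :=
    exists_isSeparated_union_eq_of_not_connected hmin.prop.1 hconn
  rcases le_max_iff.1 (hmin.prop.2.trans (hf A B hT'T hA hB hAB)) with hfA | hfB
  · exact hmin.not_prop_of_lt (hAB.ssubset_union_left hB) ⟨hA, hfA⟩
  · exact hmin.not_prop_of_lt (Finset.union_comm B A ▸ hAB.symm.ssubset_union_left hA) ⟨hB, hfB⟩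

end Separation

section DeltaSet

variable {V : Type*} [Fintype V] [DecidableEq V] {G : SimpleGraph V} {x : V → ℝ} (S : Finset V)

theorem deltaSet_union_le_max {A B : Finset V} (hAB : IsSeparated G A B)
    (hA : 0 < ∑ v ∈ A, x v ^ 2) (hB : 0 < ∑ v ∈ B, x v ^ 2) :
    deltaSet G x S (A ∪ B) ≤ max (deltaSet G x S A) (deltaSet G x S B) := by
  simp only [deltaSet]
  rw [hAB.sum_edgeFinset_union, Finset.sum_union hAB.disjoint, Finset.sum_union hAB.disjoint,
    add_add_add_comm]
  exact add_div_add_le_max_div hA hB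

theorem exists_connected_subset_deltaSet_le {T : Finset V} (hT : T.Nonempty)
    (hx : ∀ v ∈ T, x v ≠ 0) :
    ∃ T' ⊆ T, T'.Nonempty ∧ (G.induce (T' : Set V)).Connected ∧
      deltaSet G x S T ≤ deltaSet G x S T' := by
  have mass_pos : ∀ A ⊆ T, A.Nonempty → 0 < ∑ v ∈ A, x v ^ 2 := fun A hAT hA =>
    Finset.sum_pos (fun v hv => sq_pos_of_ne_zero (hx v (hAT hv))) hA
  refine exists_connected_subset_le_of_union_le_max hT fun A B hABT hA hB hAB => ?_
  exact deltaSet_union_le_max S hAB (mass_pos A (Finset.union_subset_left hABT) hA)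
    (mass_pos B (Finset.union_subset_right hABT) hB)

end DeltaSet

/-- **Relaxation to connected nodesets (proof of Theorem 2).** For every nonempty `T`
disjoint from `S` there is a nonempty `T' ⊆ T` inducing a connected subgraph of `G`
with `Δ_S(T') ≥ Δ_S(T)`; consequently, whenever some nonempty set disjoint from `S`
exists, the maximum of `Δ_S` is attained on a set inducing a connected subgraph. -/
theorem deltaSet_connected_relaxation {V : Type*} [Fintype V] [DecidableEq V]
    (G : SimpleGraph V) (x : V → ℝ) (hx : ∀ v, x v ≠ 0)
    (S : Finset V) (hS : S.Nonempty) :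
    (∀ T : Finset V, T.Nonempty → Disjoint T S →
      ∃ T' : Finset V, T' ⊆ T ∧ T'.Nonempty ∧
        (G.induce (T' : Set V)).Connected ∧
        deltaSet G x S T' ≥ deltaSet G x S T) ∧
    (∀ T₀ : Finset V, T₀.Nonempty → Disjoint T₀ S →
      ∃ Tstar : Finset V, Tstar.Nonempty ∧ Disjoint Tstar S ∧
        (G.induce (Tstar : Set V)).Connected ∧
        ∀ T : Finset V, T.Nonempty → Disjoint T S →
          deltaSet G x S T ≤ deltaSet G x S Tstar) := by
  have exists_connected (T : Finset V) (hT : T.Nonempty) :=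
    exists_connected_subset_deltaSet_le (G := G) S hT fun v _ => hx v
  refine ⟨fun T hT _ => exists_connected T hT, fun T₀ hT₀ hT₀S => ?_⟩
  obtain ⟨M, ⟨hM, hMS⟩, hmax⟩ := Set.exists_max_image
    {T : Finset V | T.Nonempty ∧ Disjoint T S} (deltaSet G x S) (Set.toFinite _)
    ⟨T₀, hT₀, hT₀S⟩
  obtain ⟨T', hT'M, hT', hconn, hle⟩ := exists_connected M hM
  exact ⟨T', hT', Finset.disjoint_of_subset_left hT'M hMS, hconn,
    fun T hT hTS => (hmax T ⟨hT, hTS⟩).trans hle⟩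
end
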